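/- arXiv:2306.12576 — 5 statements merged into one kernel-verified Lean document; each statement's English description precedes it below -/
import Mathlib

section
/- Let X be a finite set, let ℓ ≥ 1 be an integer, let q ∈ (0,1)^X, and define p ∈ (0,1)^X by p_x = 1 - (1 - q_x)^{4⌊log₂(2ℓ)⌋ + 7} for each x ∈ X. For any ℓ-bounded family H ⊆ 2^X, if c_q(H) > 1/2, then Pr[X_p ∈ ⟨H⟩] > 1/2. -/
/-- The product measure `μ_p` on subsets of a finite set `X`:
`μ_p(S) = ∏_{x∈S} p_x · ∏_{y∉S} (1-p_y)`. -/
def prodMeasure {X : Type*} [Fintype X] [DecidableEq X] (p : X → ℝ) (S : Finset X) : ℝ :=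
  (∏ x ∈ S, p x) * ∏ x ∈ Sᶜ, (1 - p x)

/-- `⟨G⟩`: the up-closure of a family `G` of subsets of `X`. -/
def upClosure {X : Type*} [Fintype X] [DecidableEq X] (G : Finset (Finset X)) :
    Finset (Finset X) :=
  Finset.univ.filter (fun T => ∃ S ∈ G, S ⊆ T)

/-- `e_q(H) = Σ_{S∈H} ∏_{x∈S} q_x`. -/
def eCost {X : Type*} (q : X → ℝ) (H : Finset (Finset X)) : ℝ :=
  ∑ S ∈ H, ∏ x ∈ S, q x

/-- The `q`-cost `c_q(H) = min{e_q(G) : H ⊆ ⟨G⟩}`. -/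
noncomputable def qCost {X : Type*} [Fintype X] [DecidableEq X] (q : X → ℝ)
    (H : Finset (Finset X)) : ℝ :=
  sInf {c : ℝ | ∃ G : Finset (Finset X), H ⊆ upClosure G ∧ c = eCost q G}

/-- `Pr[X_p ∈ ⟨H⟩]`, where `X_p` is sampled from `μ_p`. -/
def prInUpClosure {X : Type*} [Fintype X] [DecidableEq X] (p : X → ℝ)
    (H : Finset (Finset X)) : ℝ :=
  ∑ S ∈ upClosure H, prodMeasure p S

/-!
Build `X_p` as `W ∪ B`, where `W` is random with marginals `1 - (1 - q)^4` and `B` is independent of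
it. The set `W` leaves the minimal members of `{S \ W : S ∈ H}` to be covered. If every member of
`H` has fewer than `2m` elements, the fragments with at least `m` elements are cheap on average:
pairing each such fragment `T` with `Z = W ∪ T`, minimality puts `T` inside any fixed member of `H`
contained in `Z`, which leaves at most `2^(2m-1)` choices of `T` for each `Z`, and moving `T` from
the cost into the measure gains a factor `4^(-m)`. Dropping the large fragments halves the size
bound and barely lowers the cost, so one can recurse on the small ones, using `B`.

The quantity that makes the recursion lossless is `c (1 - P) ≤ P / 2`, with `c` the `q`-cost of `H`
and `P` the probability that the random set lies in `⟨H⟩`. The average cost of the large fragments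
is at most `Pr[W ∈ ⟨H⟩] / 2`, and this is exactly the slack in the inequality for the small
fragments when `W ∈ ⟨H⟩`, as then they are covered with probability `1`.
-/

open Finset

section OneSubPow

lemma natCast_mul_mul_one_sub_pow_le {t : ℝ} (ht : t ∈ Set.Icc 0 1) (n : ℕ) :
    n * t * (1 - t) ^ n ≤ 1 - (1 - t) ^ n := by
  have one_sub_nonneg : 0 ≤ 1 - t := sub_nonneg.2 ht.2
  have bernoulli : 1 + n * t ≤ (1 + t) ^ n := one_add_mul_le_pow (by linarith [ht.1]) n
  have product_le_one : (1 + n * t) * (1 - t) ^ n ≤ 1 :=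
    calc (1 + n * t) * (1 - t) ^ n ≤ (1 + t) ^ n * (1 - t) ^ n := by gcongr
      _ = (1 - t ^ 2) ^ n := by rw [← mul_pow]; ring
      _ ≤ 1 := pow_le_one₀ (by nlinarith [ht.1]) (by nlinarith)
  linarith

lemma one_sub_one_sub_pow_mem_Icc {t : ℝ} (ht : t ∈ Set.Icc 0 1) (n : ℕ) :
    1 - (1 - t) ^ n ∈ Set.Icc 0 1 := by
  have := pow_nonneg (sub_nonneg.2 ht.2) n
  have := pow_le_one₀ (n := n) (sub_nonneg.2 ht.2) (sub_le_self 1 ht.1)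
  constructor <;> linarith

end OneSubPow

section ProductMeasure

variable {X : Type*} [Fintype X] [DecidableEq X]

lemma prod_decide_mem {M : Type*} [CommMonoid M] (F : X → Bool → M) (S : Finset X) :
    ∏ x, F x (decide (x ∈ S)) = (∏ x ∈ S, F x true) * ∏ x ∈ Sᶜ, F x false := by
  rw [← prod_mul_prod_compl S]
  congr 1 <;> refine prod_congr rfl fun x hx => ?_
  · simp [hx]
  · simp [mem_compl.1 hx]

lemma sum_prod_decide_mem {R : Type*} [CommSemiring R] (F : X → Bool → R) :
    ∑ S : Finset X, ∏ x, F x (decide (x ∈ S)) = ∏ x, (F x true + F x false) := by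
  simp only [prod_decide_mem, Fintype.prod_add]

lemma prodMeasure_eq_prod_ite (p : X → ℝ) (S : Finset X) :
    prodMeasure p S = ∏ x, if x ∈ S then p x else 1 - p x := by
  simpa [prodMeasure] using (prod_decide_mem (fun x i => if i then p x else 1 - p x) S).symm

lemma prodMeasure_nonneg {p : X → ℝ} (hp : ∀ x, p x ∈ Set.Icc 0 1) : 0 ≤ prodMeasure p :=
  fun _ => mul_nonneg (prod_nonneg fun x _ => (hp x).1)
    (prod_nonneg fun x _ => sub_nonneg.2 (hp x).2)

lemma sum_prodMeasure (p : X → ℝ) : ∑ S, prodMeasure p S = 1 := by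
  simp [prodMeasure, ← Fintype.prod_add]

lemma sum_prodMeasure_union_eq {a b p : X → ℝ} (h : ∀ x, 1 - p x = (1 - a x) * (1 - b x))
    (S : Finset X) :
    ∑ A, ∑ B, (if A ∪ B = S then prodMeasure a A * prodMeasure b B else 0) =
      prodMeasure p S := by
  let F (x : X) (i j : Bool) : ℝ :=
    if (i || j) = decide (x ∈ S) then
      (if i then a x else 1 - a x) * (if j then b x else 1 - b x)
    else 0
  have factor (A B : Finset X) :
      (if A ∪ B = S then prodMeasure a A * prodMeasure b B else 0) =
        ∏ x, F x (decide (x ∈ A)) (decide (x ∈ B)) := by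
    simp only [F, ← Bool.decide_or, decide_eq_decide, decide_eq_true_eq, Fintype.prod_ite_zero,
      prod_mul_distrib, ← prodMeasure_eq_prod_ite, Finset.ext_iff, mem_union]
  simp only [factor, sum_prod_decide_mem (fun x => F x _)]
  rw [sum_prod_decide_mem fun x i => F x i true + F x i false, prodMeasure_eq_prod_ite]
  refine prod_congr rfl fun x _ => ?_
  by_cases hx : x ∈ S
  · have union_prob : a x * b x + a x * (1 - b x) + (1 - a x) * b x = p x := by linarith [h x]
    simpa [F, hx] using union_prob
  · simp [F, hx, h]

/-- The expectation `E[f(X_p)]` of a function of the random set `X_p`, as a linear functional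
of `f`. -/
noncomputable def prodExpect (p : X → ℝ) : (Finset X → ℝ) →ₗ[ℝ] ℝ :=
  dotProductBilin ℝ ℝ (prodMeasure p)

lemma prodExpect_apply (p : X → ℝ) (f : Finset X → ℝ) :
    prodExpect p f = ∑ S, prodMeasure p S * f S :=
  rfl

lemma prodExpect_one (p : X → ℝ) : prodExpect p 1 = 1 := by
  simp [prodExpect_apply, sum_prodMeasure]

lemma prodExpect_mono {p : X → ℝ} (hp : ∀ x, p x ∈ Set.Icc 0 1) {f g : Finset X → ℝ}
    (hfg : f ≤ g) : prodExpect p f ≤ prodExpect p g :=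
  dotProduct_le_dotProduct_of_nonneg_left hfg (prodMeasure_nonneg hp)

lemma prodExpect_union {a b p : X → ℝ} (h : ∀ x, 1 - p x = (1 - a x) * (1 - b x))
    (f : Finset X → ℝ) :
    prodExpect p f = prodExpect a fun A => prodExpect b fun B => f (A ∪ B) := by
  simp only [prodExpect_apply, ← sum_prodMeasure_union_eq h, sum_mul, mul_sum]
  rw [sum_comm]
  refine sum_congr rfl fun A _ => ?_
  rw [sum_comm]
  refine sum_congr rfl fun B _ => ?_
  simp [ite_mul, mul_assoc]

lemma prodMeasure_mul_prod_le {q w : X → ℝ} {δ : ℝ} (hq : ∀ x, 0 ≤ q x)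
    (hw : ∀ x, w x ∈ Set.Icc 0 1) (hδ : ∀ x, (1 - w x) * q x ≤ w x * δ)
    {W T : Finset X} (hTW : Disjoint T W) :
    prodMeasure w W * ∏ x ∈ T, q x ≤ prodMeasure w (W ∪ T) * δ ^ #T := by
  rw [← prod_const, ← Fintype.prod_ite_mem T q, ← Fintype.prod_ite_mem T fun _ => δ,
    prodMeasure_eq_prod_ite, prodMeasure_eq_prod_ite, ← prod_mul_distrib, ← prod_mul_distrib]
  refine prod_le_prod (fun x _ => ?_) fun x _ => ?_
  · have := (hw x).1
    have := sub_nonneg.2 (hw x).2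
    have := hq x
    split_ifs <;> positivity
  · by_cases hxT : x ∈ T
    · simpa [hxT, disjoint_left.1 hTW hxT] using hδ x
    · simp [hxT]

end ProductMeasure

section UpClosure

variable {X : Type*} [Fintype X] [DecidableEq X]

lemma mem_upClosure {G : Finset (Finset X)} {T : Finset X} :
    T ∈ upClosure G ↔ ∃ S ∈ G, S ⊆ T := by
  simp [upClosure]

lemma subset_upClosure (G : Finset (Finset X)) : G ⊆ upClosure G :=
  fun S hS => mem_upClosure.2 ⟨S, hS, Subset.rfl⟩

lemma prInUpClosure_eq_prodExpect (p : X → ℝ) (H : Finset (Finset X)) :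
    prInUpClosure p H = prodExpect p fun S => if S ∈ upClosure H then 1 else 0 := by
  simp [prInUpClosure, prodExpect_apply]

lemma prInUpClosure_mem_Icc {p : X → ℝ} (hp : ∀ x, p x ∈ Set.Icc 0 1)
    (H : Finset (Finset X)) : prInUpClosure p H ∈ Set.Icc 0 1 :=
  ⟨sum_nonneg fun S _ => prodMeasure_nonneg hp S,
    sum_prodMeasure p ▸ sum_le_univ_sum_of_nonneg (prodMeasure_nonneg hp)⟩

lemma prInUpClosure_of_empty_mem (p : X → ℝ) {H : Finset (Finset X)} (hH : ∅ ∈ H) :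
    prInUpClosure p H = 1 := by
  have upClosure_eq_univ : upClosure H = univ :=
    eq_univ_of_forall fun _ => mem_upClosure.2 ⟨∅, hH, empty_subset _⟩
  rw [prInUpClosure, upClosure_eq_univ, sum_prodMeasure]

end UpClosure

section Cost

variable {X : Type*} {q : X → ℝ}

lemma eCost_nonneg (hq : ∀ x, 0 ≤ q x) (G : Finset (Finset X)) :
    0 ≤ eCost q G :=
  sum_nonneg fun _ _ => prod_nonneg fun x _ => hq x

variable [DecidableEq X]

lemma eCost_union_le (hq : ∀ x, 0 ≤ q x) (G G' : Finset (Finset X)) :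
    eCost q (G ∪ G') ≤ eCost q G + eCost q G' := by
  have inter_nonneg := eCost_nonneg hq (G ∩ G')
  unfold eCost at *
  rw [← sum_union_inter]
  linarith

variable [Fintype X]

lemma qCost_le_eCost (hq : ∀ x, 0 ≤ q x) {H G : Finset (Finset X)} (hG : H ⊆ upClosure G) :
    qCost q H ≤ eCost q G :=
  csInf_le ⟨0, by rintro _ ⟨G', -, rfl⟩; exact eCost_nonneg hq G'⟩ ⟨G, hG, rfl⟩

lemma le_qCost {H : Finset (Finset X)} {c : ℝ} (hc : ∀ G, H ⊆ upClosure G → c ≤ eCost q G) :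
    c ≤ qCost q H :=
  le_csInf ⟨_, H, subset_upClosure H, rfl⟩ (by rintro _ ⟨G, hG, rfl⟩; exact hc G hG)

lemma qCost_nonneg (hq : ∀ x, 0 ≤ q x) (H : Finset (Finset X)) : 0 ≤ qCost q H :=
  le_qCost fun G _ => eCost_nonneg hq G

end Cost

section Fragments

variable {X : Type*} [DecidableEq X]

open Classical in
/-- The minimal fragments of `H` with respect to `W`: the inclusion-minimal sets of the form `S \ W`
with `S ∈ H`. Together they cover `H`. -/
noncomputable def minimalFragments (H : Finset (Finset X)) (W : Finset X) : Finset (Finset X) :=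
  (H.image (· \ W)).filter (Minimal (· ∈ H.image (· \ W)))

/-- The minimal fragments with at least `m` elements, which are put directly into the cover
of `H`. -/
noncomputable def largeFragments (m : ℕ) (H : Finset (Finset X)) (W : Finset X) :
    Finset (Finset X) :=
  {T ∈ minimalFragments H W | m ≤ #T}

/-- The minimal fragments with fewer than `m` elements, which are left to the recursion. -/
noncomputable def smallFragments (m : ℕ) (H : Finset (Finset X)) (W : Finset X) :
    Finset (Finset X) :=
  {T ∈ minimalFragments H W | #T < m}

variable {H : Finset (Finset X)} {W S T : Finset X} {m : ℕ}

lemma mem_minimalFragments :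
    T ∈ minimalFragments H W ↔ Minimal (· ∈ H.image (· \ W)) T := by
  simp only [minimalFragments, mem_filter, and_iff_right_iff_imp]
  exact Minimal.prop

lemma exists_sdiff_eq_of_mem_minimalFragments (hT : T ∈ minimalFragments H W) :
    ∃ S ∈ H, S \ W = T :=
  mem_image.1 (mem_minimalFragments.1 hT).prop

lemma disjoint_of_mem_minimalFragments (hT : T ∈ minimalFragments H W) : Disjoint T W := by
  obtain ⟨S, -, rfl⟩ := exists_sdiff_eq_of_mem_minimalFragments hT
  exact sdiff_disjoint

lemma subset_of_mem_minimalFragments (hT : T ∈ minimalFragments H W) (hS : S ∈ H)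
    (hSWT : S ⊆ W ∪ T) : T ⊆ S :=
  ((mem_minimalFragments.1 hT).le_of_le (mem_image_of_mem _ hS)
    (sdiff_le_iff.2 hSWT)).trans sdiff_subset

lemma exists_mem_minimalFragments_subset (W : Finset X) (hS : S ∈ H) :
    ∃ T ∈ minimalFragments H W, T ⊆ S := by
  obtain ⟨T, hTS, hT⟩ := exists_le_minimal (H.image (· \ W)) (mem_image_of_mem _ hS)
  exact ⟨T, mem_minimalFragments.2 hT, hTS.trans sdiff_subset⟩

variable [Fintype X]

lemma union_mem_upClosure_of_mem_minimalFragments (hT : T ∈ minimalFragments H W) :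
    W ∪ T ∈ upClosure H := by
  obtain ⟨S, hS, rfl⟩ := exists_sdiff_eq_of_mem_minimalFragments hT
  exact mem_upClosure.2 ⟨S, hS, sdiff_le_iff.1 le_rfl⟩

lemma union_mem_upClosure_of_mem_upClosure_smallFragments {B : Finset X}
    (hB : B ∈ upClosure (smallFragments m H W)) : W ∪ B ∈ upClosure H := by
  obtain ⟨T, hT, hTB⟩ := mem_upClosure.1 hB
  obtain ⟨S, hS, hSWT⟩ := mem_upClosure.1
    (union_mem_upClosure_of_mem_minimalFragments (mem_filter.1 hT).1)
  exact mem_upClosure.2 ⟨S, hS, hSWT.trans (union_subset_union_right hTB)⟩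

lemma empty_mem_smallFragments (hm : 0 < m) (hW : W ∈ upClosure H) :
    ∅ ∈ smallFragments m H W := by
  obtain ⟨S, hS, hSW⟩ := mem_upClosure.1 hW
  obtain ⟨T, hT, hTS⟩ := exists_mem_minimalFragments_subset W hS
  have hT_empty : T = ∅ :=
    (disjoint_of_mem_minimalFragments hT).eq_bot_of_le (hTS.trans hSW)
  exact mem_filter.2 ⟨hT_empty ▸ hT, by simpa using hm⟩

lemma subset_upClosure_union_largeFragments {G : Finset (Finset X)}
    (hG : smallFragments m H W ⊆ upClosure G) :
    H ⊆ upClosure (G ∪ largeFragments m H W) := by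
  intro S hS
  obtain ⟨T, hT, hTS⟩ := exists_mem_minimalFragments_subset W hS
  rw [mem_upClosure]
  rcases lt_or_ge #T m with small | large
  · obtain ⟨R, hR, hRT⟩ := mem_upClosure.1 (hG (mem_filter.2 ⟨hT, small⟩))
    exact ⟨R, mem_union_left _ hR, hRT.trans hTS⟩
  · exact ⟨T, mem_union_right _ (mem_filter.2 ⟨hT, large⟩), hTS⟩

lemma qCost_le_smallFragments_add_largeFragments {q : X → ℝ} (hq : ∀ x, 0 ≤ q x) (m : ℕ)
    (H : Finset (Finset X)) (W : Finset X) :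
    qCost q H ≤ qCost q (smallFragments m H W) + eCost q (largeFragments m H W) := by
  rw [← sub_le_iff_le_add]
  refine le_qCost fun G hG => sub_le_iff_le_add.2 ?_
  exact (qCost_le_eCost hq (subset_upClosure_union_largeFragments hG)).trans
    (eCost_union_le hq _ _)

lemma prodExpect_prInUpClosure_smallFragments_le {w p' p : X → ℝ}
    (hw : ∀ x, w x ∈ Set.Icc 0 1) (hp' : ∀ x, p' x ∈ Set.Icc 0 1)
    (hp : ∀ x, 1 - p x = (1 - w x) * (1 - p' x)) (m : ℕ) (H : Finset (Finset X)) :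
    prodExpect w (fun W => prInUpClosure p' (smallFragments m H W)) ≤ prInUpClosure p H := by
  simp only [prInUpClosure_eq_prodExpect, prodExpect_union hp]
  refine prodExpect_mono hw fun W => prodExpect_mono hp' fun B => ?_
  dsimp only
  split_ifs with hB hWB hWB
  · exact le_rfl
  · exact absurd (union_mem_upClosure_of_mem_upClosure_smallFragments hB) hWB
  · exact zero_le_one
  · exact le_rfl

end Fragments

section LargeFragments

variable {X : Type*} [Fintype X] [DecidableEq X]

lemma sum_sum_union_eq_sum_sum_powerset {M : Type*} [AddCommMonoid M]
    {U : Finset X → Finset (Finset X)} (hU : ∀ W, ∀ T ∈ U W, Disjoint T W)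
    (f : Finset X → Finset X → M) :
    ∑ W, ∑ T ∈ U W, f (W ∪ T) T = ∑ Z, ∑ T ∈ Z.powerset with T ∈ U (Z \ T), f Z T := by
  rw [sum_sigma', sum_sigma']
  refine sum_bij' (fun z _ => ⟨z.1 ∪ z.2, z.2⟩) (fun z _ => ⟨z.1 \ z.2, z.2⟩) ?_ ?_ ?_ ?_ ?_
  · rintro ⟨W, T⟩ hT
    simp only [mem_sigma, mem_univ, true_and] at hT
    simpa only [mem_sigma, mem_univ, true_and, mem_filter, mem_powerset,
      union_sdiff_cancel_right (hU W T hT).symm] using ⟨subset_union_right, hT⟩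
  · rintro ⟨Z, T⟩ hT
    simp only [mem_sigma, mem_univ, true_and, mem_filter] at hT
    simp [hT.2]
  · rintro ⟨W, T⟩ hT
    simp only [mem_sigma, mem_univ, true_and] at hT
    simp [union_sdiff_cancel_right (hU W T hT).symm]
  · rintro ⟨Z, T⟩ hT
    simp only [mem_sigma, mem_univ, true_and, mem_filter, mem_powerset] at hT
    simp [sdiff_union_of_subset hT.1]
  · rintro ⟨W, T⟩ -
    rfl

lemma sum_quarter_pow_card_le {ι : Type*} {S : Finset ι} {m : ℕ} (hS : #S < 2 * m) :
    ∑ T ∈ S.powerset with m ≤ #T, (1 / 4 : ℝ) ^ #T ≤ 1 / 2 := by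
  calc ∑ T ∈ S.powerset with m ≤ #T, (1 / 4 : ℝ) ^ #T
      ≤ ∑ T ∈ S.powerset with m ≤ #T, (1 / 4 : ℝ) ^ m :=
        sum_le_sum fun T hT =>
          pow_le_pow_of_le_one (by norm_num) (by norm_num) (mem_filter.1 hT).2
    _ ≤ ∑ _T ∈ S.powerset, (1 / 4 : ℝ) ^ m :=
        sum_le_sum_of_subset_of_nonneg (filter_subset _ _) fun _ _ _ => by positivity
    _ = 2 ^ #S * (1 / 4) ^ m := by simp
    _ = 2 ^ (#S + 1) / 2 ^ (2 * m) / 2 := by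
        rw [pow_mul, pow_succ, one_div_pow]
        norm_num
        ring
    _ ≤ 1 / 2 := by
        gcongr
        exact div_le_one_of_le₀ (pow_le_pow_right₀ one_le_two hS) (by positivity)

lemma sum_quarter_pow_card_largeFragments_le {m : ℕ} {H : Finset (Finset X)}
    (hH : ∀ S ∈ H, #S < 2 * m) (Z : Finset X) :
    ∑ T ∈ Z.powerset with T ∈ largeFragments m H (Z \ T), (1 / 4 : ℝ) ^ #T ≤
      if Z ∈ upClosure H then 1 / 2 else 0 := by
  have mem_minimal {T : Finset X}
      (hT : T ∈ Z.powerset.filter fun T => T ∈ largeFragments m H (Z \ T)) :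
      T ∈ minimalFragments H (Z \ T) ∧ Z \ T ∪ T = Z ∧ m ≤ #T := by
    simp only [mem_filter, mem_powerset, largeFragments] at hT
    exact ⟨hT.2.1, sdiff_union_of_subset hT.1, hT.2.2⟩
  split_ifs with hZ
  · obtain ⟨S, hS, hSZ⟩ := mem_upClosure.1 hZ
    refine (sum_le_sum_of_subset_of_nonneg (fun T hT => ?_) fun _ _ _ => by positivity).trans
      (sum_quarter_pow_card_le (hH S hS))
    obtain ⟨hTmin, hTZ, hTm⟩ := mem_minimal hT
    exact mem_filter.2
      ⟨mem_powerset.2 (subset_of_mem_minimalFragments hTmin hS (hTZ.symm ▸ hSZ)), hTm⟩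
  · refine (sum_eq_zero fun T hT => ?_).le
    obtain ⟨hTmin, hTZ, -⟩ := mem_minimal hT
    exact absurd (hTZ ▸ union_mem_upClosure_of_mem_minimalFragments hTmin) hZ

lemma prodExpect_eCost_largeFragments_le {q w : X → ℝ} (hq : ∀ x, 0 ≤ q x)
    (hw : ∀ x, w x ∈ Set.Icc 0 1) (hqw : ∀ x, (1 - w x) * q x ≤ w x * (1 / 4))
    {m : ℕ} {H : Finset (Finset X)} (hH : ∀ S ∈ H, #S < 2 * m) :
    prodExpect w (fun W => eCost q (largeFragments m H W)) ≤ prInUpClosure w H / 2 := by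
  have disj (W T : Finset X) (hT : T ∈ largeFragments m H W) : Disjoint T W :=
    disjoint_of_mem_minimalFragments (mem_filter.1 hT).1
  calc prodExpect w (fun W => eCost q (largeFragments m H W))
      = ∑ W, ∑ T ∈ largeFragments m H W, prodMeasure w W * ∏ x ∈ T, q x := by
        simp only [prodExpect_apply, eCost, mul_sum]
    _ ≤ ∑ W, ∑ T ∈ largeFragments m H W, prodMeasure w (W ∪ T) * (1 / 4) ^ #T :=
        sum_le_sum fun W _ => sum_le_sum fun T hT =>
          prodMeasure_mul_prod_le hq hw hqw (disj W T hT)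
    _ = prodExpect w fun Z =>
          ∑ T ∈ Z.powerset with T ∈ largeFragments m H (Z \ T), (1 / 4) ^ #T := by
        rw [sum_sum_union_eq_sum_sum_powerset disj fun Z T => prodMeasure w Z * (1 / 4) ^ #T]
        simp only [prodExpect_apply, mul_sum]
    _ ≤ prodExpect w fun Z => if Z ∈ upClosure H then 1 / 2 else 0 :=
        prodExpect_mono hw (sum_quarter_pow_card_largeFragments_le hH)
    _ = prInUpClosure w H / 2 := by
        simp [prodExpect_apply, prInUpClosure, sum_mul, div_eq_mul_inv]

end LargeFragments

section Recursion

variable {X : Type*} [Fintype X] [DecidableEq X]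

lemma qCost_mul_one_sub_smallFragments_le {q p' : X → ℝ} (hq : ∀ x, 0 ≤ q x)
    (hp' : ∀ x, p' x ∈ Set.Icc 0 1) {m : ℕ} (hm : 0 < m) {H : Finset (Finset X)} {W : Finset X}
    (hsmall : qCost q (smallFragments m H W) * (1 - prInUpClosure p' (smallFragments m H W)) ≤
      prInUpClosure p' (smallFragments m H W) / 2) :
    qCost q H * (1 - prInUpClosure p' (smallFragments m H W)) ≤
      eCost q (largeFragments m H W) + prInUpClosure p' (smallFragments m H W) / 2 -
        (if W ∈ upClosure H then 1 else 0) / 2 := by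
  have large_nonneg := eCost_nonneg hq (largeFragments m H W)
  split_ifs with hW
  · rw [prInUpClosure_of_empty_mem p' (empty_mem_smallFragments hm hW)]
    linarith
  · have cost_le := qCost_le_smallFragments_add_largeFragments hq m H W
    obtain ⟨pr_nonneg, pr_le_one⟩ := prInUpClosure_mem_Icc hp' (smallFragments m H W)
    set P := prInUpClosure p' (smallFragments m H W)
    set c := qCost q (smallFragments m H W)
    set E := eCost q (largeFragments m H W)
    calc qCost q H * (1 - P)
        ≤ (c + E) * (1 - P) := mul_le_mul_of_nonneg_right cost_le (sub_nonneg.2 pr_le_one)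
      _ = c * (1 - P) + E * (1 - P) := add_mul _ _ _
      _ ≤ P / 2 + E :=
          add_le_add hsmall (mul_le_of_le_one_right large_nonneg (sub_le_self 1 pr_nonneg))
      _ = E + P / 2 - 0 / 2 := by ring

lemma qCost_mul_one_sub_le_of_smallFragments {q w p' p : X → ℝ} (hq : ∀ x, 0 ≤ q x)
    (hw : ∀ x, w x ∈ Set.Icc 0 1) (hqw : ∀ x, (1 - w x) * q x ≤ w x * (1 / 4))
    (hp' : ∀ x, p' x ∈ Set.Icc 0 1) (hp : ∀ x, 1 - p x = (1 - w x) * (1 - p' x))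
    {m : ℕ} (hm : 0 < m) {H : Finset (Finset X)} (hH : ∀ S ∈ H, #S < 2 * m)
    (hsmall : ∀ W,
      qCost q (smallFragments m H W) * (1 - prInUpClosure p' (smallFragments m H W)) ≤
        prInUpClosure p' (smallFragments m H W) / 2) :
    qCost q H * (1 - prInUpClosure p H) ≤ prInUpClosure p H / 2 := by
  let P : Finset X → ℝ := fun W => prInUpClosure p' (smallFragments m H W)
  let E : Finset X → ℝ := fun W => eCost q (largeFragments m H W)
  let I : Finset X → ℝ := fun W => if W ∈ upClosure H then 1 else 0
  have pointwise : qCost q H • (1 - P) ≤ E + (1 / 2 : ℝ) • P - (1 / 2 : ℝ) • I := fun W => by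
    have := qCost_mul_one_sub_smallFragments_le hq hp' hm (hsmall W)
    simp only [Pi.smul_apply, Pi.sub_apply, Pi.add_apply, Pi.one_apply, smul_eq_mul, P, E, I]
    linarith
  have averaged : qCost q H * (1 - prodExpect w P) ≤
      prodExpect w E + 1 / 2 * prodExpect w P - 1 / 2 * prInUpClosure w H := by
    simpa only [map_smul, map_sub, map_add, prodExpect_one, smul_eq_mul, I,
      ← prInUpClosure_eq_prodExpect] using prodExpect_mono hw pointwise
  have large_le : prodExpect w E ≤ prInUpClosure w H / 2 :=
    prodExpect_eCost_largeFragments_le hq hw hqw hH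
  have small_le : prodExpect w P ≤ prInUpClosure p H :=
    prodExpect_prInUpClosure_smallFragments_le hw hp' hp m H
  calc qCost q H * (1 - prInUpClosure p H)
      ≤ qCost q H * (1 - prodExpect w P) :=
        mul_le_mul_of_nonneg_left (sub_le_sub_left small_le 1) (qCost_nonneg hq H)
    _ ≤ prodExpect w P / 2 := by linarith
    _ ≤ prInUpClosure p H / 2 := by gcongr

lemma qCost_mul_one_sub_prInUpClosure_le_of_subset_singleton_empty {q p : X → ℝ}
    (hq : ∀ x, 0 ≤ q x) (hp : ∀ x, p x ∈ Set.Icc 0 1) {H : Finset (Finset X)} (hH : H ⊆ {∅}) :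
    qCost q H * (1 - prInUpClosure p H) ≤ prInUpClosure p H / 2 := by
  rcases subset_singleton_iff.1 hH with rfl | rfl
  · have cost_le : qCost q (∅ : Finset (Finset X)) ≤ 0 :=
      qCost_le_eCost (G := ∅) hq (empty_subset _)
    obtain ⟨pr_nonneg, pr_le_one⟩ := prInUpClosure_mem_Icc hp ∅
    exact (mul_nonpos_of_nonpos_of_nonneg cost_le (sub_nonneg.2 pr_le_one)).trans
      (div_nonneg pr_nonneg zero_le_two)
  · rw [prInUpClosure_of_empty_mem p (mem_singleton_self ∅)]
    norm_num

lemma qCost_mul_one_sub_prInUpClosure_le {q : X → ℝ} (hq : ∀ x, q x ∈ Set.Icc 0 1) {r n : ℕ}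
    (hn : 4 * r ≤ n) {H : Finset (Finset X)} (hH : ∀ S ∈ H, #S < 2 ^ r) :
    qCost q H * (1 - prInUpClosure (fun x => 1 - (1 - q x) ^ n) H) ≤
      prInUpClosure (fun x => 1 - (1 - q x) ^ n) H / 2 := by
  have q_nonneg x : 0 ≤ q x := (hq x).1
  have pow_mem (k : ℕ) x := one_sub_one_sub_pow_mem_Icc (hq x) k
  induction r generalizing n H with
  | zero =>
    refine qCost_mul_one_sub_prInUpClosure_le_of_subset_singleton_empty q_nonneg (pow_mem n) ?_
    exact fun S hS => by simpa using hH S hS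
  | succ r ih =>
    obtain ⟨k, rfl⟩ := Nat.exists_eq_add_of_le' (show 4 ≤ n by omega)
    refine qCost_mul_one_sub_le_of_smallFragments q_nonneg (pow_mem 4) (fun x => ?_) (pow_mem k)
      (fun x => by ring) (Nat.two_pow_pos r) (fun S hS => ?_) fun W => ?_
    · have := natCast_mul_mul_one_sub_pow_le (hq x) 4
      push_cast at this
      linarith
    · simpa [pow_succ'] using hH S hS
    · exact ih (by omega) fun T hT => (mem_filter.1 hT).2

end Recursion

theorem kahn_kalai_product_general {X : Type*} [Fintype X] [DecidableEq X]
    {q : X → ℝ} (hq : ∀ x, q x ∈ Set.Icc (0 : ℝ) 1) {r n : ℕ} (hn : 4 * r ≤ n)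
    {p : X → ℝ} (hp : ∀ x, p x = 1 - (1 - q x) ^ n)
    {H : Finset (Finset X)} (hH : ∀ S ∈ H, #S < 2 ^ r) :
    qCost q H / (qCost q H + 1 / 2) ≤ prInUpClosure p H := by
  obtain rfl : p = fun x => 1 - (1 - q x) ^ n := funext hp
  have cost_nonneg := qCost_nonneg (fun x => (hq x).1) H
  rw [div_le_iff₀ (by positivity)]
  linarith [qCost_mul_one_sub_prInUpClosure_le hq hn hH]

/-- Theorem 1: for `p_x = 1 - (1-q_x)^{4⌊log₂(2ℓ)⌋+7}`, if `H` is `ℓ`-bounded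
and `c_q(H) > 1/2`, then `Pr[X_p ∈ ⟨H⟩] > 1/2`. -/
theorem kahn_kalai_product {X : Type*} [Fintype X] [DecidableEq X]
    (ℓ : ℕ) (hℓ : 1 ≤ ℓ)
    (q : X → ℝ) (hq : ∀ x, q x ∈ Set.Ioo (0 : ℝ) 1)
    (p : X → ℝ) (hp : ∀ x, p x = 1 - (1 - q x) ^ (4 * Nat.log 2 (2 * ℓ) + 7))
    (H : Finset (Finset X)) (hbd : ∀ S ∈ H, S.card ≤ ℓ)
    (hcost : 1 / 2 < qCost q H) :
    1 / 2 < prInUpClosure p H := by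
  have card_lt (S) (hS : S ∈ H) : #S < 2 ^ Nat.log 2 (2 * ℓ) := by
    rw [mul_comm, Nat.log_mul_base one_lt_two (by omega)]
    exact (hbd S hS).trans_lt (Nat.lt_pow_succ_log_self one_lt_two ℓ)
  calc (1 / 2 : ℝ) < qCost q H / (qCost q H + 1 / 2) := by
        rw [lt_div_iff₀ (by linarith)]
        linarith
    _ ≤ prInUpClosure p H :=
        kahn_kalai_product_general (fun x => Set.Ioo_subset_Icc_self (hq x)) (by omega) hp card_lt
end

section
/- For every real L ≥ 1, the function f(q) = q(1-q)^L / (1 - (1-q)^L) is decreasing on (0,1), its limit as q → 0⁺ equals 1/L, and consequently f(q) ≤ 1/L for all q ∈ (0,1). -/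
/-!
The reciprocal of `f` is the secant slope between `0` and `q` of the strictly convex function
`g(q) = (1 - q)^(-L)`: dividing through by `(1 - q)^L` gives `1 / f(q) = (g(q) - g(0)) / q`.
These slopes increase by convexity, keep a constant sign because `g` is monotone, and tend to
`g'(0) = L`, so their inverses decrease and tend to `1 / L`.
-/

open Set Filter Topology

section Slope

variable {𝕜 : Type*} [Field 𝕜] [LinearOrder 𝕜] [IsStrictOrderedRing 𝕜] {s : Set 𝕜} {g : 𝕜 → 𝕜}
  {a : 𝕜}

theorem strictMonoOn_slope_of_strictConvexOn (hg : StrictConvexOn 𝕜 s g) (ha : a ∈ s) :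
    StrictMonoOn (slope g a) (s \ {a}) := by
  intro x hx y hy hxy
  simpa only [slope_def_field] using hg.secant_strict_mono ha hx.1 hy.1 hx.2 hy.2 hxy

theorem strictAntiOn_inv_slope_of_strictConvexOn (hg : StrictConvexOn 𝕜 s g)
    (hmono : StrictMonoOn g s ∨ StrictAntiOn g s) (ha : a ∈ s) :
    StrictAntiOn (fun x ↦ (slope g a x)⁻¹) (s \ {a}) := by
  intro x hx y hy hxy
  have hslope := strictMonoOn_slope_of_strictConvexOn hg ha hx hy hxy
  rcases hmono with hmono | hanti
  · exact inv_strictAnti₀ (hmono.slope_pos ha hx.1 (Ne.symm hx.2)) hslope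
  · exact (inv_lt_inv_of_neg (hanti.slope_neg ha hy.1 (Ne.symm hy.2))
      (hanti.slope_neg ha hx.1 (Ne.symm hx.2))).2 hslope

end Slope

theorem lt_of_strictAntiOn_of_tendsto_nhdsGT {α β : Type*} [LinearOrder α] [TopologicalSpace α]
    [OrderTopology α] [DenselyOrdered α] [Preorder β] [TopologicalSpace β] [ClosedIciTopology β]
    {f : α → β} {a b x : α} {l : β} (hf : StrictAntiOn f (Ioo a b))
    (hlim : Tendsto f (𝓝[>] a) (𝓝 l)) (hx : x ∈ Ioo a b) : f x < l := by
  obtain ⟨y, hay, hyx⟩ := exists_between hx.1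
  have hy : y ∈ Ioo a b := ⟨hay, hyx.trans hx.2⟩
  have : (𝓝[>] a).NeBot := nhdsGT_neBot_of_exists_gt ⟨x, hx.1⟩
  have hfy : f y ≤ l := by
    refine ge_of_tendsto hlim ?_
    filter_upwards [Ioo_mem_nhdsGT hay] with z hz
    exact (hf ⟨hz.1, hz.2.trans hy.2⟩ hy hz.2).le
  exact (hf hy hx hyx).trans_le hfy

section OneSubRpow

variable {p : ℝ}

theorem strictAntiOn_one_sub_rpow (hp : 0 < p) :
    StrictAntiOn (fun q : ℝ ↦ (1 - q) ^ p) (Iio 1) := fun _ _ _ hy hxy ↦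
  Real.rpow_lt_rpow (sub_nonneg.2 (mem_Iio.1 hy).le) (sub_lt_sub_left hxy 1) hp

theorem strictMonoOn_one_sub_rpow (hp : p < 0) :
    StrictMonoOn (fun q : ℝ ↦ (1 - q) ^ p) (Iio 1) := fun _ _ _ hy hxy ↦
  Real.rpow_lt_rpow_of_neg (sub_pos.2 hy) (sub_lt_sub_left hxy 1) hp

theorem hasDerivAt_one_sub_rpow {q : ℝ} (hq : q < 1) :
    HasDerivAt (fun q : ℝ ↦ (1 - q) ^ p) (-p * (1 - q) ^ (p - 1)) q := by
  simpa only [neg_one_mul] using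
    ((hasDerivAt_id' q).const_sub 1).rpow_const (p := p) (Or.inl (sub_pos.2 hq).ne')

theorem strictConvexOn_one_sub_rpow (hp : p < 0 ∨ 1 < p) :
    StrictConvexOn ℝ (Iio 1) fun q : ℝ ↦ (1 - q) ^ p := by
  have hderiv_mono : StrictMonoOn (fun q : ℝ ↦ -p * (1 - q) ^ (p - 1)) (Iio 1) := by
    rcases hp with hp | hp
    · exact fun x hx y hy hxy ↦ mul_lt_mul_of_pos_left
        (strictMonoOn_one_sub_rpow (by linarith) hx hy hxy) (neg_pos.2 hp)
    · exact fun x hx y hy hxy ↦ mul_lt_mul_of_neg_left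
        (strictAntiOn_one_sub_rpow (sub_pos.2 hp) hx hy hxy) (by linarith)
  refine StrictMonoOn.strictConvexOn_of_deriv (convex_Iio 1)
    (fun q hq ↦ (hasDerivAt_one_sub_rpow hq).continuousAt.continuousWithinAt) ?_
  rw [interior_Iio]
  exact hderiv_mono.congr fun q hq ↦ (hasDerivAt_one_sub_rpow hq).deriv.symm

end OneSubRpow

/-- The function `f` of the theorem, with its parameter `L` made explicit. At `q = 0`, where
`1 / L` would be the continuous extension, the division gives `0`. -/
noncomputable def qRatio (L q : ℝ) : ℝ := q * (1 - q) ^ L / (1 - (1 - q) ^ L)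

section QRatio

variable {L : ℝ}

theorem qRatio_eq_inv_slope {q : ℝ} (hq : q < 1) :
    qRatio L q = (slope (fun q : ℝ ↦ (1 - q) ^ (-L)) 0 q)⁻¹ := by
  have hpow : (1 - q) ^ L ≠ 0 := (Real.rpow_pos_of_pos (sub_pos.2 hq) L).ne'
  calc qRatio L q = q / ((1 - (1 - q) ^ L) / (1 - q) ^ L) := (div_div_eq_mul_div _ _ _).symm
    _ = q / ((1 - q) ^ (-L) - 1) := by
      rw [sub_div, div_self hpow, one_div, Real.rpow_neg (sub_pos.2 hq).le]
    _ = (slope (fun q : ℝ ↦ (1 - q) ^ (-L)) 0 q)⁻¹ := by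
      rw [slope_def_field, inv_div, sub_zero, sub_zero, Real.one_rpow]

theorem strictAntiOn_qRatio (hL : L < -1 ∨ 0 < L) : StrictAntiOn (qRatio L) (Iio 1 \ {0}) := by
  have hconvex : StrictConvexOn ℝ (Iio 1) fun q : ℝ ↦ (1 - q) ^ (-L) :=
    strictConvexOn_one_sub_rpow (hL.symm.imp neg_lt_zero.2 lt_neg_of_lt_neg)
  have hmono : StrictMonoOn (fun q : ℝ ↦ (1 - q) ^ (-L)) (Iio 1) ∨
      StrictAntiOn (fun q : ℝ ↦ (1 - q) ^ (-L)) (Iio 1) :=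
    hL.symm.imp (fun hL ↦ strictMonoOn_one_sub_rpow (neg_lt_zero.2 hL))
      (fun hL ↦ strictAntiOn_one_sub_rpow (by linarith))
  exact (strictAntiOn_inv_slope_of_strictConvexOn hconvex hmono (mem_Iio.2 one_pos)).congr
    fun q hq ↦ (qRatio_eq_inv_slope hq.1).symm

theorem tendsto_qRatio_nhdsNE_zero (hL : L ≠ 0) : Tendsto (qRatio L) (𝓝[≠] 0) (𝓝 (1 / L)) := by
  have hderiv : HasDerivAt (fun q : ℝ ↦ (1 - q) ^ (-L)) L 0 := by
    simpa only [neg_neg, sub_zero, Real.one_rpow, mul_one] using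
      hasDerivAt_one_sub_rpow (p := -L) one_pos
  rw [one_div]
  refine (hderiv.tendsto_slope.inv₀ hL).congr' ?_
  filter_upwards [nhdsWithin_le_nhds (Iio_mem_nhds one_pos)] with q hq
  exact (qRatio_eq_inv_slope hq).symm

end QRatio

theorem q_ratio_decreasing_limit_bound_general (L : ℝ) (hL : L < -1 ∨ 0 < L)
    (f : ℝ → ℝ) (hf : ∀ q : ℝ, f q = q * (1 - q) ^ L / (1 - (1 - q) ^ L)) :
    StrictAntiOn f (Iio 1 \ {0}) ∧ Tendsto f (𝓝[≠] 0) (𝓝 (1 / L)) ∧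
    ∀ q ∈ Ioo (0 : ℝ) 1, f q < 1 / L := by
  obtain rfl : f = qRatio L := funext hf
  have hanti := strictAntiOn_qRatio hL
  have hL₀ : L ≠ 0 := by
    rintro rfl
    norm_num at hL
  have hlim := tendsto_qRatio_nhdsNE_zero hL₀
  exact ⟨hanti, hlim, fun q ↦ lt_of_strictAntiOn_of_tendsto_nhdsGT
    (hanti.mono fun q hq ↦ ⟨hq.2, hq.1.ne'⟩) (hlim.mono_left (nhdsGT_le_nhdsNE 0))⟩

/-- for `L ≥ 1`, the function `f(q) = q(1−q)^L / (1 − (1−q)^L)` is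
decreasing on `(0,1)`, tends to `1/L` as `q → 0⁺`, and satisfies `f(q) ≤ 1/L` on `(0,1)`. -/
theorem q_ratio_decreasing_limit_bound (L : ℝ) (hL : 1 ≤ L)
    (f : ℝ → ℝ) (hf : ∀ q : ℝ, f q = q * (1 - q) ^ L / (1 - (1 - q) ^ L)) :
    StrictAntiOn f (Set.Ioo (0 : ℝ) 1) ∧
    Filter.Tendsto f (nhdsWithin 0 (Set.Ioi (0 : ℝ))) (nhds (1 / L)) ∧
    ∀ q ∈ Set.Ioo (0 : ℝ) 1, f q ≤ 1 / L := by
  obtain ⟨hanti, hlim, hlt⟩ :=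
    q_ratio_decreasing_limit_bound_general L (Or.inr (one_pos.trans_le hL)) f hf
  exact ⟨hanti.mono fun q hq ↦ ⟨hq.2, hq.1.ne'⟩, hlim.mono_left (nhdsGT_le_nhdsNE 0),
    fun q hq ↦ (hlt q hq).le⟩
end

section
/- The infinite double series satisfies Σ_{i=8}^{∞} Σ_{j=2^{i-1}}^{2^i − 1} (1/4)^j · binom(2^i − 1, j) ≤ (1 + √2)/(12√π). -/
/-! Every coefficient of `(1 + x) ^ (2 * m - 1)` is at most half of the central binomial
coefficient `C(2m, m)`, which Wallis' product bounds by `4 ^ m / √(π m)`. Summing the powers of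
`x` over the upper half of the expansion as a geometric series costs a factor `x ^ m / (1 - x)`,
so at `x = 1 / 4` the exponentials cancel and the upper half is at most `2 / (3 √(π m))`. Along
`m = 2 ^ k` this is a geometric sequence of ratio `1 / √2`. -/

open Finset Real

theorem centralBinom_sq_mul_wallisW (n : ℕ) :
    (n.centralBinom : ℝ) ^ 2 * (2 * n + 1) * Wallis.W n = 16 ^ n := by
  have hfact : (n.centralBinom : ℝ) * (n.factorial : ℝ) ^ 2 = (2 * n).factorial := by
    rw [Nat.centralBinom_eq_two_mul_choose]
    have hchoose := Nat.add_choose_mul_factorial_mul_factorial n n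
    rw [← two_mul, mul_assoc, ← sq] at hchoose
    exact_mod_cast hchoose
  have hpow : (2 : ℝ) ^ (4 * n) = 16 ^ n := by rw [pow_mul]; norm_num
  have hn : (n.factorial : ℝ) ≠ 0 := by positivity
  have hC : (n.centralBinom : ℝ) ≠ 0 := mod_cast n.centralBinom_ne_zero
  rw [Wallis.W_eq_factorial_ratio, ← hfact, hpow]
  field_simp

theorem centralBinom_mul_sqrt_pi_mul_le (n : ℕ) : (n.centralBinom : ℝ) * √(π * n) ≤ 4 ^ n := by
  have hlinear : (n : ℝ) ≤ (2 * n + 1) ^ 2 / (2 * (2 * n + 2)) := by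
    rw [le_div_iff₀ (by positivity)]
    linarith
  refine le_of_sq_le_sq ?_ (by positivity)
  calc ((n.centralBinom : ℝ) * √(π * n)) ^ 2 = (n.centralBinom : ℝ) ^ 2 * (π * n) := by
        rw [mul_pow, sq_sqrt (by positivity)]
    _ ≤ (n.centralBinom : ℝ) ^ 2 * (π * ((2 * n + 1) ^ 2 / (2 * (2 * n + 2)))) := by gcongr
    _ = (n.centralBinom : ℝ) ^ 2 * (2 * n + 1) * ((2 * n + 1) / (2 * n + 2) * (π / 2)) := by
        field_simp
    _ ≤ (n.centralBinom : ℝ) ^ 2 * (2 * n + 1) * Wallis.W n := by gcongr; exact Wallis.le_W n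
    _ = (4 ^ n) ^ 2 := by rw [centralBinom_sq_mul_wallisW, ← pow_mul, mul_comm, pow_mul]; norm_num

theorem two_mul_choose_two_mul_add_one (n : ℕ) :
    2 * (2 * n + 1).choose n = (n + 1).centralBinom := by
  rw [Nat.centralBinom_eq_two_mul_choose, mul_add_one, Nat.choose_succ_succ', Nat.choose_symm_half,
    two_mul]

theorem two_mul_choose_two_mul_sub_one_le {m : ℕ} (hm : 0 < m) (j : ℕ) :
    2 * (2 * m - 1).choose j ≤ m.centralBinom := by
  obtain ⟨n, rfl⟩ := Nat.exists_eq_add_one.mpr hm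
  calc 2 * (2 * n + 1).choose j ≤ 2 * (2 * n + 1).choose ((2 * n + 1) / 2) := by
        gcongr; exact Nat.choose_le_middle j _
    _ = (n + 1).centralBinom := by
        rw [show (2 * n + 1) / 2 = n by omega, two_mul_choose_two_mul_add_one]

theorem choose_two_mul_sub_one_le {m : ℕ} (hm : 0 < m) (j : ℕ) :
    ((2 * m - 1).choose j : ℝ) ≤ 4 ^ m / (2 * √(π * m)) := by
  have hchoose : (2 : ℝ) * (2 * m - 1).choose j ≤ m.centralBinom :=
    mod_cast two_mul_choose_two_mul_sub_one_le hm j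
  rw [le_div_iff₀ (by positivity)]
  calc ((2 * m - 1).choose j : ℝ) * (2 * √(π * m))
      = 2 * (2 * m - 1).choose j * √(π * m) := by ring
    _ ≤ m.centralBinom * √(π * m) := by gcongr
    _ ≤ 4 ^ m := centralBinom_mul_sqrt_pi_mul_le m

/-- The upper half, of degrees `m, …, 2m - 1`, of the binomial expansion of `(1 + x) ^ (2m - 1)`.
The `i`-th inner sum of the double series is the case `x = 1 / 4`, `m = 2 ^ (i - 1)`. -/
noncomputable def upperHalfBinomialSum (x : ℝ) (m : ℕ) : ℝ :=
  ∑ j ∈ Icc m (2 * m - 1), x ^ j * ((2 * m - 1).choose j : ℝ)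

theorem upperHalfBinomialSum_nonneg {x : ℝ} (hx : 0 ≤ x) (m : ℕ) :
    0 ≤ upperHalfBinomialSum x m :=
  sum_nonneg fun _ _ ↦ by positivity

theorem upperHalfBinomialSum_le {x : ℝ} (hx₀ : 0 ≤ x) (hx₁ : x < 1) {m : ℕ} (hm : 0 < m) :
    upperHalfBinomialSum x m ≤ (4 * x) ^ m / (2 * (1 - x) * √(π * m)) := by
  have hIcc : Icc m (2 * m - 1) = Ico m (2 * m) := by grind
  calc upperHalfBinomialSum x m
      ≤ ∑ j ∈ Icc m (2 * m - 1), x ^ j * (4 ^ m / (2 * √(π * m))) := by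
        unfold upperHalfBinomialSum
        gcongr with j
        exact choose_two_mul_sub_one_le hm j
    _ = (∑ j ∈ Ico m (2 * m), x ^ j) * (4 ^ m / (2 * √(π * m))) := by rw [sum_mul, hIcc]
    _ ≤ x ^ m / (1 - x) * (4 ^ m / (2 * √(π * m))) := by
        gcongr
        exact geom_sum_Ico_le_of_lt_one hx₀ hx₁
    _ = (4 * x) ^ m / (2 * (1 - x) * √(π * m)) := by
        rw [div_mul_div_comm, mul_pow]
        ring

theorem upperHalfBinomialSum_one_quarter_two_pow_le (k : ℕ) :
    upperHalfBinomialSum (1 / 4) (2 ^ k) ≤ 2 / (3 * √π) * (√2)⁻¹ ^ k := by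
  have hsqrt : √(π * (2 ^ k : ℕ)) = √π * √2 ^ k := by
    rw [sqrt_mul pi_nonneg, Nat.cast_pow, Nat.cast_ofNat]
    congr 1
    rw [sqrt_eq_iff_eq_sq (by positivity) (by positivity), pow_right_comm, sq_sqrt zero_le_two]
  calc upperHalfBinomialSum (1 / 4) (2 ^ k)
      ≤ (4 * (1 / 4)) ^ 2 ^ k / (2 * (1 - 1 / 4) * √(π * (2 ^ k : ℕ))) :=
        upperHalfBinomialSum_le (by norm_num) (by norm_num) (by positivity)
    _ = 2 / (3 * √π) * (√2)⁻¹ ^ k := by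
        rw [hsqrt, mul_one_div_cancel four_ne_zero, one_pow, inv_pow]
        field_simp
        norm_num

theorem hasSum_inv_sqrt_two_pow_add (k : ℕ) :
    HasSum (fun n : ℕ ↦ (√2)⁻¹ ^ (n + k)) (√2 * (1 + √2) * (√2)⁻¹ ^ k) := by
  have hinv : (1 - (√2)⁻¹)⁻¹ = √2 * (1 + √2) := by
    refine inv_eq_of_mul_eq_one_right ?_
    field_simp
    linarith [sq_sqrt (zero_le_two : (0 : ℝ) ≤ 2)]
  have hlt : (√2)⁻¹ < 1 := inv_lt_one_of_one_lt₀ one_lt_sqrt_two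
  simpa only [pow_add, hinv] using
    (hasSum_geometric_of_lt_one (by positivity) hlt).mul_right ((√2)⁻¹ ^ k)

theorem summable_upperHalfBinomialSum_one_quarter_two_pow_add (k : ℕ) :
    Summable fun n : ℕ ↦ upperHalfBinomialSum (1 / 4) (2 ^ (n + k)) :=
  .of_nonneg_of_le (fun _ ↦ upperHalfBinomialSum_nonneg (by norm_num) _)
    (fun _ ↦ upperHalfBinomialSum_one_quarter_two_pow_le _)
    ((hasSum_inv_sqrt_two_pow_add k).summable.mul_left _)

theorem tsum_upperHalfBinomialSum_one_quarter_two_pow_add_le (k : ℕ) :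
    ∑' n : ℕ, upperHalfBinomialSum (1 / 4) (2 ^ (n + k)) ≤
      2 / (3 * √π) * (√2 * (1 + √2) * (√2)⁻¹ ^ k) :=
  hasSum_le (fun _ ↦ upperHalfBinomialSum_one_quarter_two_pow_le _)
    (summable_upperHalfBinomialSum_one_quarter_two_pow_add k).hasSum
    ((hasSum_inv_sqrt_two_pow_add k).mul_left _)

/-- `Σ_{i=8}^{∞} Σ_{j=2^{i−1}}^{2^i−1} 4^{−j} C(2^i−1, j) ≤ (1+√2)/(12√π)`.
(The outer sum is reindexed by `i = n + 8`.) -/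
theorem tail_series_bound :
    ∑' n : ℕ, ∑ j ∈ Finset.Icc (2 ^ (n + 7)) (2 ^ (n + 8) - 1),
        ((1 : ℝ) / 4) ^ j * ((2 ^ (n + 8) - 1).choose j : ℝ)
      ≤ (1 + Real.sqrt 2) / (12 * Real.sqrt Real.pi) := by
  have hblock : ∀ n : ℕ, upperHalfBinomialSum (1 / 4) (2 ^ (n + 7)) =
      ∑ j ∈ Icc (2 ^ (n + 7)) (2 ^ (n + 8) - 1),
        ((1 : ℝ) / 4) ^ j * ((2 ^ (n + 8) - 1).choose j : ℝ) := fun n ↦ by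
    rw [upperHalfBinomialSum, ← pow_succ']
  have hpow : √2 * (√2)⁻¹ ^ 7 = 1 / 8 := by
    have hpow_six : √2 ^ 6 = 8 := by
      rw [pow_mul √2 2 3, sq_sqrt zero_le_two]
      norm_num
    rw [inv_pow, pow_succ' √2 6, mul_inv, mul_inv_cancel_left₀ (by positivity), hpow_six, one_div]
  calc _ = ∑' n : ℕ, upperHalfBinomialSum (1 / 4) (2 ^ (n + 7)) := by simp only [hblock]
    _ ≤ 2 / (3 * √π) * (√2 * (1 + √2) * (√2)⁻¹ ^ 7) :=
        tsum_upperHalfBinomialSum_one_quarter_two_pow_add_le 7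
    _ = 2 / (3 * √π) * ((1 + √2) * (√2 * (√2)⁻¹ ^ 7)) := by ring
    _ = (1 + √2) / (12 * √π) := by
        rw [hpow]
        field_simp
        norm_num
end

section
/- With L = 6, the series bound Σ_{i=1}^{∞} Σ_{j=2^{i-1}}^{2^i − 1} (1/L)^j · binom(2^i − 1, j) ≤ 1/L + 3/L² + 1/L³ + 35/L⁴ + (4/L)^5/(2(1 − 4/L)) = 23/48 < 1/2 holds. -/
/- Every `j ≥ 1` lies in exactly one block `2^(i-1) ≤ j ≤ 2^i - 1`, so the double series is a single
power series in `1/L`, and `2^i ≤ 2j` gives `binom(2^i - 1, j) ≤ 2^(2^i - 1) ≤ 4^j / 2`. Keeping the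
terms `j ≤ 4` exactly and bounding the others by the geometric series of ratio `4/L` yields the
right-hand side, for every `L > 4`. -/

open Finset Filter

theorem hasSum_sum_Ico_of_nonneg {f : ℕ → ℝ} {s : ℝ} (hf₀ : ∀ j, 0 ≤ f j) (hf : HasSum f s)
    {u : ℕ → ℕ} (hu : Monotone u) (hu_top : Tendsto u atTop atTop) :
    HasSum (fun n ↦ ∑ j ∈ Ico (u n) (u (n + 1)), f j) (s - ∑ j ∈ range (u 0), f j) := by
  have partial_sum (N : ℕ) : ∑ n ∈ range N, ∑ j ∈ Ico (u n) (u (n + 1)), f j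
      = ∑ j ∈ range (u N), f j - ∑ j ∈ range (u 0), f j := by
    have block_sum (n : ℕ) : ∑ j ∈ Ico (u n) (u (n + 1)), f j
        = ∑ j ∈ range (u (n + 1)), f j - ∑ j ∈ range (u n), f j :=
      sum_Ico_eq_sub f (hu n.le_succ)
    simp_rw [block_sum]
    exact sum_range_sub (fun n ↦ ∑ j ∈ range (u n), f j) N
  rw [hasSum_iff_tendsto_nat_of_nonneg fun n ↦ sum_nonneg fun j _ ↦ hf₀ j]
  simp_rw [partial_sum]
  exact (hf.tendsto_sum_nat.comp hu_top).sub_const _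

theorem two_mul_choose_le_four_pow {m j : ℕ} (h : m < 2 * j) : 2 * m.choose j ≤ 4 ^ j :=
  calc 2 * m.choose j ≤ 2 * 2 ^ m := Nat.mul_le_mul_left 2 (Nat.choose_le_two_pow m j)
    _ = 2 ^ (m + 1) := (pow_succ' 2 m).symm
    _ ≤ 2 ^ (2 * j) := Nat.pow_le_pow_right two_pos h
    _ = 4 ^ j := pow_mul 2 2 j

theorem hasSum_geometric_nat_add_of_lt_one {r : ℝ} (h₀ : 0 ≤ r) (h₁ : r < 1) (k : ℕ) :
    HasSum (fun j ↦ r ^ (j + k)) (r ^ k / (1 - r)) := by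
  simpa only [pow_add, inv_mul_eq_div] using (hasSum_geometric_of_lt_one h₀ h₁).mul_right (r ^ k)

/-- The coefficient `binom(2^i - 1, j)` of `(1/L)^j` in the double series, where `i` is the index of
the block `2^(i-1) ≤ j < 2^i` containing `j`, that is, `i = Nat.log 2 j + 1`. The index `j = 0` lies
in no block; there the value is `1`. -/
def dyadicChoose (j : ℕ) : ℕ :=
  (2 ^ (Nat.log 2 j + 1) - 1).choose j

theorem dyadicChoose_zero : dyadicChoose 0 = 1 :=
  Nat.choose_zero_right _

theorem dyadicChoose_of_mem_Ico {n j : ℕ} (hj : j ∈ Ico (2 ^ n) (2 ^ (n + 1))) :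
    dyadicChoose j = (2 ^ (n + 1) - 1).choose j := by
  obtain ⟨hle, hlt⟩ := mem_Ico.1 hj
  rw [dyadicChoose, Nat.log_eq_of_pow_le_of_lt_pow hle hlt]

theorem two_mul_dyadicChoose_le_four_pow {j : ℕ} (hj : j ≠ 0) : 2 * dyadicChoose j ≤ 4 ^ j := by
  have hlog : 2 ^ Nat.log 2 j ≤ j := Nat.pow_log_le_self 2 hj
  exact two_mul_choose_le_four_pow (by grind)

theorem pow_mul_dyadicChoose_le {x : ℝ} (hx₀ : 0 ≤ x) {j : ℕ} (hj : j ≠ 0) :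
    x ^ j * dyadicChoose j ≤ (4 * x) ^ j / 2 := by
  have hcoeff : 2 * (dyadicChoose j : ℝ) ≤ 4 ^ j := mod_cast two_mul_dyadicChoose_le_four_pow hj
  calc x ^ j * dyadicChoose j = x ^ j * (2 * dyadicChoose j) / 2 := by ring
    _ ≤ x ^ j * 4 ^ j / 2 := by gcongr
    _ = (4 * x) ^ j / 2 := by rw [mul_pow, mul_comm]

theorem summable_pow_mul_dyadicChoose {x : ℝ} (hx₀ : 0 ≤ x) (hx : 4 * x < 1) :
    Summable fun j ↦ x ^ j * dyadicChoose j := by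
  have geometric := hasSum_geometric_nat_add_of_lt_one (by positivity) hx 1
  exact (summable_nat_add_iff 1).1 <| (geometric.div_const 2).summable.of_nonneg_of_le
    (fun j ↦ by positivity) (fun j ↦ pow_mul_dyadicChoose_le hx₀ j.succ_ne_zero)

theorem tsum_pow_mul_dyadicChoose_le {x : ℝ} (hx₀ : 0 ≤ x) (hx : 4 * x < 1) {k : ℕ} (hk : k ≠ 0) :
    ∑' j, x ^ j * dyadicChoose j
      ≤ ∑ j ∈ range k, x ^ j * dyadicChoose j + (4 * x) ^ k / (2 * (1 - 4 * x)) := by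
  have hsummable := summable_pow_mul_dyadicChoose hx₀ hx
  have geometric := hasSum_geometric_nat_add_of_lt_one (by positivity) hx k
  have tail_le : ∑' j, x ^ (j + k) * dyadicChoose (j + k) ≤ (4 * x) ^ k / (1 - 4 * x) / 2 :=
    hasSum_le (fun j ↦ pow_mul_dyadicChoose_le hx₀ (by lia))
      ((summable_nat_add_iff k).2 hsummable).hasSum (geometric.div_const 2)
  rw [← hsummable.sum_add_tsum_nat_add k, mul_comm 2, ← div_div]
  gcongr

theorem sum_range_five_pow_mul_dyadicChoose (x : ℝ) :
    ∑ j ∈ range 5, x ^ j * dyadicChoose j = 1 + x + 3 * x ^ 2 + x ^ 3 + 35 * x ^ 4 := by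
  norm_num [sum_range_succ, dyadicChoose, Nat.choose]
  ring

theorem hasSum_sum_Icc_pow_mul_choose {x : ℝ} (hx₀ : 0 ≤ x) (hx : 4 * x < 1) :
    HasSum (fun n : ℕ ↦ ∑ j ∈ Icc (2 ^ n) (2 ^ (n + 1) - 1),
        x ^ j * ((2 ^ (n + 1) - 1).choose j : ℝ))
      (∑' j, x ^ j * dyadicChoose j - 1) := by
  convert! hasSum_sum_Ico_of_nonneg (fun j ↦ by positivity)
    (summable_pow_mul_dyadicChoose hx₀ hx).hasSum (pow_right_mono₀ one_le_two)
    (tendsto_pow_atTop_atTop_of_one_lt one_lt_two) using 2 with n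
  · rw [Icc_sub_one_right_eq_Ico_of_not_isMin (by simp)]
    exact sum_congr rfl fun j hj ↦ by rw [dyadicChoose_of_mem_Ico hj]
  · simp [dyadicChoose_zero]

theorem series_bound_L_six_general (L : ℝ) (hL : 4 < L) :
    (Summable fun n : ℕ ↦ ∑ j ∈ Icc (2 ^ n) (2 ^ (n + 1) - 1),
        (1 / L) ^ j * ((2 ^ (n + 1) - 1).choose j : ℝ)) ∧
    ∑' n : ℕ, ∑ j ∈ Icc (2 ^ n) (2 ^ (n + 1) - 1),
        (1 / L) ^ j * ((2 ^ (n + 1) - 1).choose j : ℝ)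
      ≤ 1 / L + 3 / L ^ 2 + 1 / L ^ 3 + 35 / L ^ 4 + (4 / L) ^ 5 / (2 * (1 - 4 / L)) := by
  have hx₀ : 0 ≤ 1 / L := by positivity
  have hx : 4 * (1 / L) < 1 := by rwa [mul_one_div, div_lt_one (by positivity)]
  have hsum := hasSum_sum_Icc_pow_mul_choose hx₀ hx
  have hbound := tsum_pow_mul_dyadicChoose_le hx₀ hx (k := 5) (by simp)
  rw [sum_range_five_pow_mul_dyadicChoose, mul_one_div] at hbound
  refine ⟨hsum.summable, hsum.tsum_eq.trans_le ?_⟩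
  calc ∑' j, (1 / L) ^ j * dyadicChoose j - 1
      ≤ 1 + 1 / L + 3 * (1 / L) ^ 2 + (1 / L) ^ 3 + 35 * (1 / L) ^ 4
          + (4 / L) ^ 5 / (2 * (1 - 4 / L)) - 1 := sub_le_sub_right hbound 1
    _ = 1 / L + 3 / L ^ 2 + 1 / L ^ 3 + 35 / L ^ 4 + (4 / L) ^ 5 / (2 * (1 - 4 / L)) := by ring

/-- with `L = 6`,
`Σ_{i=1}^{∞} Σ_{j=2^{i−1}}^{2^i−1} L^{−j} C(2^i−1, j)
  ≤ 1/L + 3/L² + 1/L³ + 35/L⁴ + (4/L)⁵/(2(1−4/L)) = 23/48 < 1/2`.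
(The outer sum is reindexed by `i = n + 1`.) -/
theorem series_bound_L_six (L : ℝ) (hL : L = 6) :
    (∑' n : ℕ, ∑ j ∈ Finset.Icc (2 ^ n) (2 ^ (n + 1) - 1),
        (1 / L) ^ j * ((2 ^ (n + 1) - 1).choose j : ℝ)
      ≤ 1 / L + 3 / L ^ 2 + 1 / L ^ 3 + 35 / L ^ 4 + (4 / L) ^ 5 / (2 * (1 - 4 / L))) ∧
    1 / L + 3 / L ^ 2 + 1 / L ^ 3 + 35 / L ^ 4 + (4 / L) ^ 5 / (2 * (1 - 4 / L))
      = 23 / 48 ∧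
    (23 / 48 : ℝ) < 1 / 2 := by
  subst hL
  exact ⟨(series_bound_L_six_general 6 (by norm_num)).2, by norm_num, by norm_num⟩
end

section
/- Let X be a finite set, q ∈ (0,1)^X, and let H' ⊆ 2^X be obtained from H ⊆ 2^X by an arbitrary (possibly random) choice of W ⊆ X as H' = F*(H, W) or a subset thereof. If W₁, …, W_i are independent random subsets of X, H₀ = H, and H_j depends only on H_{j−1} and W_j with H_j ⊆ F(H_{j−1}, W_j) for each j, then Pr[W_i ∈ ⟨H_{i−1}⟩] ≤ Pr[W₁ ∪ ⋯ ∪ W_i ∈ ⟨H⟩]. More precisely: for all subsets W₁, …, W_i ⊆ X, if W_i ∈ ⟨H_{i−1}⟩ where H_j := S_{m_j}(H_{j−1}, W_j) for given integers m_j ≥ 1, then W₁ ∪ ⋯ ∪ W_i ∈ ⟨H⟩. -/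
/-- The fragments `F(H, W) = {S \ W : S ∈ H}`. -/
def fragments {X : Type*} [DecidableEq X] (H : Finset (Finset X)) (W : Finset X) :
    Finset (Finset X) :=
  H.image (fun S => S \ W)

/-- The minimal fragments `F*(H, W)`: inclusion-wise minimal elements of `F(H, W)`. -/
def minFragments {X : Type*} [DecidableEq X] (H : Finset (Finset X)) (W : Finset X) :
    Finset (Finset X) :=
  (fragments H W).filter (fun T => ∀ T' ∈ fragments H W, T' ⊆ T → T' = T)

/-- The large minimal fragments `L_m(H, W) = {T ∈ F*(H, W) : |T| ≥ m}`. -/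
def largeFrag {X : Type*} [DecidableEq X] (m : ℕ) (H : Finset (Finset X)) (W : Finset X) :
    Finset (Finset X) :=
  (minFragments H W).filter (fun T => m ≤ T.card)

/-- The small minimal fragments `S_m(H, W) = {T ∈ F*(H, W) : |T| < m}`. -/
def smallFrag {X : Type*} [DecidableEq X] (m : ℕ) (H : Finset (Finset X)) (W : Finset X) :
    Finset (Finset X) :=
  (minFragments H W).filter (fun T => T.card < m)

/-- The iterated families `H_0 = H`, `H_j = S_{m_j}(H_{j−1}, W_j)`. -/
def Hseq {X : Type*} [DecidableEq X] (H : Finset (Finset X)) (m : ℕ → ℕ)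
    (W : ℕ → Finset X) : ℕ → Finset (Finset X)
  | 0 => H
  | j + 1 => smallFrag (m (j + 1)) (Hseq H m W j) (W (j + 1))

/-! The operation `· \ w` is left adjoint to `w ⊔ ·`, so `a` lies above a fragment `x \ w` exactly
when `w ⊔ a` lies above `x` itself. Undoing the fragmentations one at a time thus moves membership
in `⟨H_n⟩` down to membership in `⟨H_0⟩`, at the price of joining with `W_n, …, W_1`. -/

theorem sup_Icc_add_one {α : Type*} [SemilatticeSup α] [OrderBot α] (f : ℕ → α) {m n : ℕ}
    (h : m ≤ n + 1) : (Finset.Icc m (n + 1)).sup f = (Finset.Icc m n).sup f ⊔ f (n + 1) := by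
  rw [← Finset.insert_Icc_right_eq_Icc_add_one h, Finset.sup_insert, sup_comm]

section GeneralizedCoheytingAlgebra

variable {α : Type*} [GeneralizedCoheytingAlgebra α]

theorem mem_upperClosure_image_sdiff {s : Set α} {w a : α} :
    a ∈ upperClosure ((· \ w) '' s) ↔ w ⊔ a ∈ upperClosure s := by
  simp only [mem_upperClosure, Set.exists_mem_image, sdiff_le_iff]

theorem sup_sup_mem_upperClosure_of_subset_image_sdiff {H : ℕ → Set α} {W : ℕ → α} {n : ℕ}
    (hH : ∀ j < n, H (j + 1) ⊆ (· \ W (j + 1)) '' H j) {a : α} (ha : a ∈ upperClosure (H n)) :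
    (Finset.Icc 1 n).sup W ⊔ a ∈ upperClosure (H 0) := by
  induction n generalizing a with
  | zero => simpa using ha
  | succ n ih =>
    have ha' : W (n + 1) ⊔ a ∈ upperClosure (H n) :=
      mem_upperClosure_image_sdiff.1 (upperClosure_anti (hH n n.lt_succ_self) ha)
    rw [sup_Icc_add_one _ (Nat.le_add_left 1 n), sup_assoc]
    exact ih (fun j hj ↦ hH j (hj.trans n.lt_succ_self)) ha'

theorem union_in_upClosure_of_iterate_general {H : ℕ → Set α} {W : ℕ → α} {n : ℕ}
    (hH : ∀ j < n, H (j + 1) ⊆ (· \ W (j + 1)) '' H j)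
    (h : W (n + 1) ∈ upperClosure (H n)) :
    (Finset.Icc 1 (n + 1)).sup W ∈ upperClosure (H 0) := by
  rw [sup_Icc_add_one _ (Nat.le_add_left 1 n)]
  exact sup_sup_mem_upperClosure_of_subset_image_sdiff hH h

end GeneralizedCoheytingAlgebra

theorem mem_upClosure_iff_mem_upperClosure {X : Type*} [Fintype X] [DecidableEq X]
    {G : Finset (Finset X)} {T : Finset X} :
    T ∈ upClosure G ↔ T ∈ upperClosure (G : Set (Finset X)) := by
  simp only [upClosure, Finset.mem_filter_univ, mem_upperClosure, Finset.mem_coe]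

theorem smallFrag_subset_fragments {X : Type*} [DecidableEq X] (m : ℕ) (H : Finset (Finset X))
    (W : Finset X) : smallFrag m H W ⊆ fragments H W :=
  (Finset.filter_subset _ _).trans (Finset.filter_subset _ _)

theorem coe_Hseq_add_one_subset_image_sdiff {X : Type*} [DecidableEq X] (H : Finset (Finset X))
    (m : ℕ → ℕ) (W : ℕ → Finset X) (j : ℕ) :
    (Hseq H m W (j + 1) : Set (Finset X)) ⊆ (· \ W (j + 1)) '' (Hseq H m W j) := by
  rw [← Finset.coe_image]
  exact Finset.coe_subset.2 (smallFrag_subset_fragments _ _ _)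

/-- for all subsets `W₁, …, W_k ⊆ X`, if `W_k ∈ ⟨H_{k−1}⟩` where
`H_j = S_{m_j}(H_{j−1}, W_j)`, then `W₁ ∪ ⋯ ∪ W_k ∈ ⟨H⟩`. -/
theorem union_in_upClosure_of_iterate {X : Type*} [Fintype X] [DecidableEq X]
    (H : Finset (Finset X)) (k : ℕ) (hk : 1 ≤ k)
    (m : ℕ → ℕ) (hm : ∀ j, 1 ≤ m j) (W : ℕ → Finset X)
    (h : W k ∈ upClosure (Hseq H m W (k - 1))) :
    (Finset.Icc 1 k).sup W ∈ upClosure H := by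
  obtain ⟨n, rfl⟩ := Nat.exists_eq_add_of_le' hk
  exact mem_upClosure_iff_mem_upperClosure.2 <| union_in_upClosure_of_iterate_general
    (H := fun j ↦ (Hseq H m W j : Set (Finset X)))
    (fun j _ ↦ coe_Hseq_add_one_subset_image_sdiff H m W j) (mem_upClosure_iff_mem_upperClosure.1 h)
end
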